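/- Let A be a connected, commutative, cocommutative graded Hopf algebra of finite type over F_p. Then the dual algebra A* is polynomial if and only if the Verschiebung λ: A → A (the dual of the Frobenius on A*) is surjective. -/

import Mathlib

/-!
STATEMENT 4: For a connected, commutative, cocommutative graded Hopf algebra `A` of
finite type over `F_p`, the dual algebra `A*` is polynomial iff the Verschiebung
`λ : A → A` (the dual of the Frobenius on `A*`) is surjective.

The graded dual `A*` is encoded as a Hopf algebra `B` together with a perfect graded
pairing `B ⊗ A → F_p` identifying the multiplication of `B` with the comultiplication of
`A` and vice versa; the Verschiebung `lam` is characterised by adjointness to the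
Frobenius of `B`.
-/

open TensorProduct

universe u

def IsCocomm (k A : Type*) [CommRing k] [AddCommMonoid A] [Module k A]
    [Coalgebra k A] : Prop :=
  (TensorProduct.comm k A A).toLinearMap ∘ₗ Coalgebra.comul = (Coalgebra.comul : A →ₗ[k] A ⊗[k] A)

open MvPolynomial in
/-- The chain rule: a derivation applied to a polynomial expression. -/
theorem Derivation.exists_finset_map_aeval {k B σ : Type*} [CommRing k] [CommRing B] [Algebra k B]
    (D : Derivation k B B) (x : σ → B) (f : MvPolynomial σ k) :
    ∃ s : Finset σ, ∀ t : Finset σ, s ⊆ t →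
      D (aeval x f) = ∑ i ∈ t, aeval x (pderiv i f) * D (x i) := by
  classical
  induction f using MvPolynomial.induction_on with
  | C a => exact ⟨∅, fun t _ => by simp⟩
  | add f g hf hg =>
    obtain ⟨s, hs⟩ := hf
    obtain ⟨s', hs'⟩ := hg
    refine ⟨s ∪ s', fun t ht => ?_⟩
    rw [map_add, map_add, hs t (Finset.union_subset_left ht), hs' t (Finset.union_subset_right ht),
      ← Finset.sum_add_distrib]
    exact Finset.sum_congr rfl fun i _ => by simp [add_mul]
  | mul_X f j hf =>
    obtain ⟨s, hs⟩ := hf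
    refine ⟨insert j s, fun t ht => ?_⟩
    have hj : j ∈ t := ht (Finset.mem_insert_self _ _)
    rw [map_mul, D.leibniz, hs t ((Finset.subset_insert _ _).trans ht), aeval_X]
    simp only [Derivation.leibniz, pderiv_X, smul_eq_mul, map_add, map_mul, aeval_X, add_mul,
      Finset.sum_add_distrib, Finset.mul_sum, mul_assoc]
    congr 1
    rw [Finset.sum_eq_single j]
    · simp
    · intro i _ hij
      simp [hij.symm]
    · exact fun h => absurd hj h

open MvPolynomial in
theorem MvPolynomial.totalDegree_pderiv_lt {k σ : Type*} [CommRing k] {f : MvPolynomial σ k} {i : σ}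
    (h : pderiv i f ≠ 0) : (pderiv i f).totalDegree < f.totalDegree := by
  obtain ⟨m, hm, hdeg⟩ := Finset.exists_mem_eq_sup (pderiv i f).support
    (support_nonempty.2 h) fun s => s.sum fun _ e => e
  have hm' : m + Finsupp.single i 1 ∈ f.support := by
    rw [mem_support_iff, coeff_pderiv] at hm
    rw [mem_support_iff]
    exact fun h0 => hm (by simp [h0])
  have hle := le_totalDegree hm'
  rw [Finsupp.sum_add_index' (by simp) (by simp), Finsupp.sum_single_index rfl] at hle
  rw [totalDegree, hdeg]
  exact Nat.lt_of_succ_le hle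

open MvPolynomial in
/-- Over `ZMod p`, a polynomial with vanishing partial derivatives is a `p`-th power. -/
theorem MvPolynomial.exists_pow_eq_of_pderiv_eq_zero {p : ℕ} [Fact p.Prime] {σ : Type*}
    {f : MvPolynomial σ (ZMod p)} (h : ∀ i, pderiv i f = 0) : ∃ g, f = g ^ p := by
  refine ⟨∑ m ∈ f.support, monomial (m.mapRange (· / p) (Nat.zero_div p)) (coeff m f), ?_⟩
  rw [sum_pow_char p]
  conv_lhs => rw [f.as_sum]
  refine Finset.sum_congr rfl fun m hm => ?_
  rw [monomial_pow, ZMod.pow_card]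
  refine congrArg (monomial · (coeff m f)) (Finsupp.ext fun i => ?_)
  simp only [Finsupp.smul_apply, Finsupp.mapRange_apply, smul_eq_mul]
  refine (Nat.mul_div_cancel' ?_).symm
  rcases Nat.eq_zero_or_pos (m i) with h0 | hpos
  · simp [h0]
  have hc := coeff_pderiv (i := i) f (m - Finsupp.single i 1)
  have hm1 : m - Finsupp.single i 1 + Finsupp.single i 1 = m :=
    tsub_add_cancel_of_le (Finsupp.single_le_iff.2 hpos)
  rw [h i, coeff_zero, hm1] at hc
  have hz := (mul_eq_zero.1 hc.symm).resolve_left (mem_support_iff.1 hm)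
  rw [← ZMod.natCast_eq_zero_iff]
  have hmi : m i = (m - Finsupp.single i 1 : σ →₀ ℕ) i + 1 := by
    simp only [Finsupp.tsub_apply, Finsupp.single_eq_same]
    omega
  rw [hmi]
  exact_mod_cast hz

open MvPolynomial in
/-- In an algebra over `ZMod p` with injective Frobenius, a family admitting a unitriangular
system of derivations is algebraically independent. -/
theorem AlgebraicIndependent.of_derivation {p : ℕ} [Fact p.Prime] {B σ : Type*} [CommRing B]
    [Nontrivial B] [Algebra (ZMod p) B] (hred : ∀ b : B, b ^ p = 0 → b = 0)
    (x : σ → B) (deg : σ → ℕ) (D : σ → Derivation (ZMod p) B B) (hone : ∀ i, D i (x i) = 1)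
    (hzero : ∀ i j, i ≠ j → deg j ≤ deg i → D i (x j) = 0) :
    AlgebraicIndependent (ZMod p) x := by
  classical
  rw [algebraicIndependent_iff]
  intro f
  induction hN : f.totalDegree using Nat.strong_induction_on generalizing f with
  | _ N ih =>
  intro hf
  subst hN
  have hval : ∀ i, aeval x (pderiv i f) = 0 := by
    by_contra! hne
    obtain ⟨i₀, hi₀⟩ := hne
    have hsub : ∀ i, aeval x (pderiv i f) ≠ 0 → i ∈ f.vars := fun i hi => by
      by_contra hv
      exact hi (by rw [pderiv_eq_zero_of_notMem_vars hv, map_zero])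
    obtain ⟨i, hi, hmax⟩ := Finset.exists_max_image
      (f.vars.filter fun i => aeval x (pderiv i f) ≠ 0) deg
      ⟨i₀, Finset.mem_filter.2 ⟨hsub _ hi₀, hi₀⟩⟩
    obtain ⟨s, hs⟩ := (D i).exists_finset_map_aeval x f
    have hsum := hs (insert i s) (Finset.subset_insert _ _)
    rw [hf, map_zero, Finset.sum_eq_single i, hone, mul_one] at hsum
    · exact (Finset.mem_filter.1 hi).2 hsum.symm
    · intro j _ hji
      by_cases hj : aeval x (pderiv j f) = 0
      · rw [hj, zero_mul]
      · rw [hzero i j hji.symm (hmax j (Finset.mem_filter.2 ⟨hsub _ hj, hj⟩)), mul_zero]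
    · exact fun h => absurd (Finset.mem_insert_self _ _) h
  have hpd : ∀ i, pderiv i f = 0 := fun i => by
    by_contra hne
    exact hne (ih _ (totalDegree_pderiv_lt hne) _ rfl (hval i))
  obtain ⟨g, rfl⟩ := exists_pow_eq_of_pderiv_eq_zero hpd
  have hp := (Fact.out : p.Prime)
  have hg : aeval x g = 0 := hred _ (by rw [← map_pow, hf])
  by_cases hdeg : g.totalDegree = 0
  · rw [totalDegree_eq_zero_iff_eq_C] at hdeg
    rw [hdeg, aeval_C, map_eq_zero_iff _ (algebraMap (ZMod p) B).injective] at hg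
    rw [hdeg, hg, C_0, zero_pow hp.ne_zero]
  · have hlt : g.totalDegree < (g ^ p).totalDegree := by
      have hg0 : g ≠ 0 := fun h => hdeg (by rw [h, totalDegree_zero])
      obtain ⟨q, hq⟩ := Nat.exists_eq_add_of_le' hp.two_le
      have hpow : g ^ p = g ^ q * (g * g) := by rw [← sq, ← pow_add, ← hq]
      rw [hpow, totalDegree_mul_of_isDomain (pow_ne_zero q hg0) (mul_ne_zero hg0 hg0),
        totalDegree_mul_of_isDomain hg0 hg0]
      omega
    rw [ih _ hlt _ rfl hg, zero_pow hp.ne_zero]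

/-- A subspace is spanned, modulo another one, by vectors admitting dual functionals. -/
theorem Submodule.exists_dual_family {k : Type*} {V : Type u} [Field k] [AddCommGroup V]
    [Module k V] (U W : Submodule k V) :
    ∃ (ι : Type u) (x : ι → V) (f : ι → Module.Dual k V), (∀ i, x i ∈ U) ∧
      U ≤ Submodule.span k (Set.range x) ⊔ W ∧ (∀ i, f i (x i) = 1) ∧
      (∀ i j, i ≠ j → f i (x j) = 0) ∧ ∀ i, ∀ w ∈ W, f i w = 0 := by
  classical
  let b := Module.Basis.ofVectorSpace k (U.map W.mkQ)
  have hlift : ∀ i, ∃ u ∈ U, W.mkQ u = b i := fun i => (b i).2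
  choose x hxU hx using hlift
  choose g hg using fun i => LinearMap.exists_extend (b.coord i)
  have hgx : ∀ i j, (g i ∘ₗ W.mkQ) (x j) = b.coord i (b j) := fun i j => by
    rw [LinearMap.comp_apply, hx, ← hg i]
    rfl
  refine ⟨_, x, fun i => g i ∘ₗ W.mkQ, hxU, fun u hu => ?_, fun i => ?_, fun i j hij => ?_,
    fun i w hw => ?_⟩
  · have hspan : W.mkQ u ∈ (Submodule.span k (Set.range x)).map W.mkQ := by
      have hu' : (⟨W.mkQ u, Submodule.mem_map_of_mem hu⟩ : U.map W.mkQ) ∈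
          Submodule.span k (Set.range b) := b.mem_span _
      have := Submodule.mem_map_of_mem (f := (U.map W.mkQ).subtype) hu'
      rw [Submodule.map_span, ← Set.range_comp] at this
      rw [Submodule.map_span, ← Set.range_comp]
      rwa [show W.mkQ ∘ x = (U.map W.mkQ).subtype ∘ b from funext hx]
    have := Submodule.mem_comap.2 hspan
    rwa [Submodule.comap_map_mkQ, sup_comm] at this
  · rw [hgx]
    simp
  · rw [hgx]
    simp [hij.symm]
  · rw [LinearMap.comp_apply, Submodule.mkQ_apply, (Submodule.Quotient.mk_eq_zero W).2 hw,
      map_zero]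

/-- A connected graded algebra over `ZMod p` with injective Frobenius in which every functional
vanishing on decomposables integrates to a derivation is a polynomial algebra. -/
theorem GradedAlgebra.exists_algEquiv_mvPolynomial {p : ℕ} [Fact p.Prime] {B : Type u} [CommRing B]
    [Nontrivial B] [Algebra (ZMod p) B] (ℬ : ℕ → Submodule (ZMod p) B) [GradedAlgebra ℬ]
    (hred : ∀ b : B, b ^ p = 0 → b = 0) (hconn : ∀ x ∈ ℬ 0, ∃ c : ZMod p, x = c • (1 : B))
    (hder : ∀ n, ∀ δ : Module.Dual (ZMod p) B,
      (∀ i j, 0 < i → 0 < j → ∀ x ∈ ℬ i, ∀ y ∈ ℬ j, δ (x * y) = 0) →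
      (∀ m, m ≠ n → ∀ x ∈ ℬ m, δ x = 0) → 0 < n →
      ∃ D : Derivation (ZMod p) B B, (∀ x ∈ ℬ n, D x = δ x • (1 : B)) ∧
        ∀ m < n, ∀ x ∈ ℬ m, D x = 0) :
    ∃ σ : Type u, Nonempty (B ≃ₐ[ZMod p] MvPolynomial σ (ZMod p)) := by
  classical
  let W : ℕ → Submodule (ZMod p) B := fun n => Submodule.span (ZMod p)
    {b | ∃ i j, 0 < i ∧ 0 < j ∧ i + j = n ∧ ∃ x ∈ ℬ i, ∃ y ∈ ℬ j, b = x * y}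
  choose ι x f hx hspan hone hzero hW using
    fun n : ℕ => Submodule.exists_dual_family (ℬ (n + 1)) (W (n + 1))
  let δ : (Σ n, ι n) → Module.Dual (ZMod p) B :=
    fun s => f s.1 s.2 ∘ₗ GradedAlgebra.proj ℬ (s.1 + 1)
  have hδ : ∀ s, ∀ b ∈ ℬ (s.1 + 1), δ s b = f s.1 s.2 b := fun s b hb => by
    simp only [δ, LinearMap.comp_apply, GradedAlgebra.proj_apply]
    rw [DirectSum.decompose_of_mem_same _ hb]
  have hδ0 : ∀ s m, m ≠ s.1 + 1 → ∀ b ∈ ℬ m, δ s b = 0 := fun s m hm b hb => by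
    simp only [δ, LinearMap.comp_apply, GradedAlgebra.proj_apply]
    rw [DirectSum.decompose_of_mem_ne _ hb hm, map_zero]
  have hδW : ∀ s i j, 0 < i → 0 < j → ∀ a ∈ ℬ i, ∀ b ∈ ℬ j, δ s (a * b) = 0 := by
    intro s i j hi hj a ha b hb
    by_cases hij : i + j = s.1 + 1
    · rw [hδ s _ (hij ▸ SetLike.mul_mem_graded ha hb)]
      exact hW _ _ _ (Submodule.subset_span ⟨i, j, hi, hj, hij, a, ha, b, hb, rfl⟩)
    · exact hδ0 s _ hij _ (SetLike.mul_mem_graded ha hb)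
  choose D hD hD0 using
    fun s => hder (s.1 + 1) (δ s) (hδW s) (hδ0 s) (Nat.succ_pos _)
  let X : (Σ n, ι n) → B := fun s => x s.1 s.2
  have hX : AlgebraicIndependent (ZMod p) X := by
    refine AlgebraicIndependent.of_derivation hred X (fun s => s.1) D (fun s => ?_) ?_
    · rw [hD s _ (hx _ _), hδ s _ (hx _ _), hone, one_smul]
    · rintro ⟨n, i⟩ ⟨m, j⟩ hij hle
      rcases Nat.lt_or_eq_of_le hle with hlt | heq
      · exact hD0 _ (m + 1) (Nat.succ_lt_succ hlt) _ (hx _ _)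
      · obtain rfl : m = n := heq
        have hij' : i ≠ j := fun h => hij (by rw [h])
        rw [hD _ _ (hx _ _), hδ _ _ (hx _ _), hzero _ _ _ hij', zero_smul]
  have hgen : ∀ n, ∀ b ∈ ℬ n, b ∈ Algebra.adjoin (ZMod p) (Set.range X) := by
    intro n
    induction n using Nat.strong_induction_on with
    | _ n ih =>
    intro b hb
    rcases n with _ | n
    · obtain ⟨c, rfl⟩ := hconn b hb
      exact Subalgebra.smul_mem _ (one_mem _) c
    · have hle : Submodule.span (ZMod p) (Set.range (x n)) ⊔ W (n + 1) ≤
          Subalgebra.toSubmodule (Algebra.adjoin (ZMod p) (Set.range X)) := by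
        refine sup_le (Submodule.span_le.2 ?_) (Submodule.span_le.2 ?_)
        · rintro _ ⟨i, rfl⟩
          exact Algebra.subset_adjoin ⟨⟨n, i⟩, rfl⟩
        · rintro _ ⟨i, j, hi, hj, hij, a, ha, c, hc, rfl⟩
          exact Subalgebra.mul_mem _ (ih i (by omega) a ha) (ih j (by omega) c hc)
      exact hle (hspan n hb)
  have htop : Algebra.adjoin (ZMod p) (Set.range X) = ⊤ := by
    rw [eq_top_iff]
    intro b _
    rw [← DirectSum.sum_support_decompose ℬ b]
    exact sum_mem fun i _ => hgen i _ (SetLike.coe_mem _)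
  exact ⟨_, ⟨(hX.aevalEquiv.trans
    ((Subalgebra.equivOfEq _ _ htop).trans Subalgebra.topEquiv)).symm⟩⟩

namespace GradedPairing

variable {k A B : Type*} [Field k] [CommRing A] [Algebra k A] [CommRing B] [Algebra k B]
  {𝒜 : ℕ → Submodule k A} {ℬ : ℕ → Submodule k B}
  {pair : B →ₗ[k] Module.Dual k A}

theorem apply_eq_of_mem_right [GradedAlgebra ℬ]
    (hgr : ∀ n, ∀ x ∈ ℬ n, ∀ m, m ≠ n → ∀ a ∈ 𝒜 m, pair x a = 0)
    {n : ℕ} {a : A} (ha : a ∈ 𝒜 n) (x : B) :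
    pair x a = pair (DirectSum.decompose ℬ x n) a := by
  classical
  conv_lhs => rw [← DirectSum.sum_support_decompose ℬ x]
  rw [map_sum, LinearMap.sum_apply, Finset.sum_eq_single n]
  · exact fun m _ hm => hgr m _ (SetLike.coe_mem _) n hm.symm a ha
  · intro hn
    rw [DFinsupp.notMem_support_iff.1 hn]
    simp

theorem apply_eq_of_mem_left [GradedAlgebra 𝒜]
    (hgr : ∀ n, ∀ x ∈ ℬ n, ∀ m, m ≠ n → ∀ a ∈ 𝒜 m, pair x a = 0)
    {n : ℕ} {x : B} (hx : x ∈ ℬ n) (a : A) :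
    pair x a = pair x (DirectSum.decompose 𝒜 a n) := by
  classical
  conv_lhs => rw [← DirectSum.sum_support_decompose 𝒜 a]
  rw [map_sum, Finset.sum_eq_single n]
  · exact fun m _ hm => hgr n x hx m hm _ (SetLike.coe_mem _)
  · intro hn
    rw [DFinsupp.notMem_support_iff.1 hn]
    simp

theorem eq_zero_of_forall [GradedAlgebra 𝒜]
    (hgr : ∀ n, ∀ x ∈ ℬ n, ∀ m, m ≠ n → ∀ a ∈ 𝒜 m, pair x a = 0)
    (hinj : Function.Injective pair) {n : ℕ} {x : B} (hx : x ∈ ℬ n)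
    (h : ∀ a ∈ 𝒜 n, pair x a = 0) : x = 0 := by
  refine hinj (LinearMap.ext fun a => ?_)
  rw [apply_eq_of_mem_left hgr hx, h _ (SetLike.coe_mem _), map_zero, LinearMap.zero_apply]

theorem mem_left_of_forall [GradedAlgebra 𝒜] [GradedAlgebra ℬ]
    (hgr : ∀ n, ∀ x ∈ ℬ n, ∀ m, m ≠ n → ∀ a ∈ 𝒜 m, pair x a = 0)
    (hinj : Function.Injective pair) {n : ℕ} {x : B}
    (h : ∀ m, m ≠ n → ∀ a ∈ 𝒜 m, pair x a = 0) : x ∈ ℬ n := by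
  classical
  rw [← DirectSum.sum_support_decompose ℬ x]
  refine sum_mem fun m _ => ?_
  rcases eq_or_ne m n with rfl | hm
  · exact SetLike.coe_mem _
  · rw [eq_zero_of_forall hgr hinj (SetLike.coe_mem (DirectSum.decompose ℬ x m)) fun a ha => by
      rw [← apply_eq_of_mem_right hgr ha, h m hm a ha]]
    exact zero_mem _

theorem mem_right_of_forall [GradedAlgebra 𝒜]
    (hgr : ∀ n, ∀ x ∈ ℬ n, ∀ m, m ≠ n → ∀ a ∈ 𝒜 m, pair x a = 0)
    (hsurj : ∀ (n : ℕ) (φ : Module.Dual k (𝒜 n)), ∃ x ∈ ℬ n, ∀ a : 𝒜 n, pair x a = φ a)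
    {n : ℕ} {a : A} (h : ∀ m, m ≠ n → ∀ x ∈ ℬ m, pair x a = 0) : a ∈ 𝒜 n := by
  classical
  rw [← DirectSum.sum_support_decompose 𝒜 a]
  refine sum_mem fun m _ => ?_
  rcases eq_or_ne m n with rfl | hm
  · exact SetLike.coe_mem _
  · have h0 : DirectSum.decompose 𝒜 a m = 0 := by
      rw [← Module.forall_dual_apply_eq_zero_iff k]
      intro φ
      obtain ⟨x, hx, hφ⟩ := hsurj m φ
      rw [← hφ, ← apply_eq_of_mem_left hgr hx, h m hm x hx]
    rw [h0]
    exact zero_mem _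

/-- Graded functionals on `B` are represented by homogeneous elements of `A`. -/
theorem exists_mem_forall_apply_eq [GradedAlgebra 𝒜] [GradedAlgebra ℬ]
    (hgr : ∀ n, ∀ x ∈ ℬ n, ∀ m, m ≠ n → ∀ a ∈ 𝒜 m, pair x a = 0)
    (hinj : Function.Injective pair)
    (hsurj : ∀ (n : ℕ) (φ : Module.Dual k (𝒜 n)), ∃ x ∈ ℬ n, ∀ a : 𝒜 n, pair x a = φ a)
    {n : ℕ} [FiniteDimensional k (𝒜 n)] (δ : Module.Dual k B)
    (hδ : ∀ m, m ≠ n → ∀ x ∈ ℬ m, δ x = 0) : ∃ a ∈ 𝒜 n, ∀ x, pair x a = δ x := by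
  let r : ℬ n →ₗ[k] Module.Dual k (𝒜 n) :=
    (Submodule.subtype (𝒜 n)).dualMap ∘ₗ pair ∘ₗ Submodule.subtype (ℬ n)
  have hr : Function.Bijective r := by
    refine ⟨(injective_iff_map_eq_zero r).2 fun x hx => Subtype.ext ?_, fun φ => ?_⟩
    · exact eq_zero_of_forall hgr hinj x.2 fun a ha => LinearMap.congr_fun hx ⟨a, ha⟩
    · obtain ⟨x, hx, h⟩ := hsurj n φ
      exact ⟨⟨x, hx⟩, LinearMap.ext h⟩
  let e := LinearEquiv.ofBijective r hr
  let a := (Module.evalEquiv k (𝒜 n)).symm (δ ∘ₗ Submodule.subtype (ℬ n) ∘ₗ e.symm.toLinearMap)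
  have ha : ∀ x ∈ ℬ n, pair x a = δ x := fun x hx => by
    have h := Module.apply_evalEquiv_symm_apply (R := k) (M := 𝒜 n) (e ⟨x, hx⟩)
      (δ ∘ₗ Submodule.subtype (ℬ n) ∘ₗ e.symm.toLinearMap)
    rw [LinearMap.comp_apply, LinearMap.comp_apply, LinearEquiv.coe_coe, e.symm_apply_apply] at h
    exact h
  refine ⟨a, a.2, fun x => ?_⟩
  classical
  rw [apply_eq_of_mem_right hgr a.2, ha _ (SetLike.coe_mem _)]
  conv_rhs => rw [← DirectSum.sum_support_decompose ℬ x]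
  rw [map_sum, Finset.sum_eq_single n]
  · exact fun m _ hm => hδ m hm _ (SetLike.coe_mem _)
  · intro hn
    rw [DFinsupp.notMem_support_iff.1 hn]
    simp

end GradedPairing

/-- The convolution action `(id ⊗ φ) ∘ Δ` of a functional on a coalgebra. -/
noncomputable def Coalgebra.convolve {k B : Type*} [CommRing k] [CommRing B] [Algebra k B]
    [Coalgebra k B] (φ : Module.Dual k B) : B →ₗ[k] B :=
  (_root_.TensorProduct.rid k B).toLinearMap ∘ₗ LinearMap.lTensor B φ ∘ₗ Coalgebra.comul

/-- If `ε` acts as the identity, an `ε`-derivation acts by a derivation. -/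
theorem Bialgebra.exists_derivation_eq_convolve {k B : Type*} [CommRing k] [CommRing B]
    [Bialgebra k B] (ε δ : Module.Dual k B) (hε : Coalgebra.convolve ε = LinearMap.id)
    (hδ : ∀ x y, δ (x * y) = ε x * δ y + ε y * δ x) :
    ∃ D : Derivation k B B, ∀ x, D x = Coalgebra.convolve δ x := by
  let T : Module.Dual k B → (B ⊗[k] B →ₗ[k] B) := fun φ =>
    (_root_.TensorProduct.rid k B).toLinearMap ∘ₗ LinearMap.lTensor B φ
  have hT : ∀ s t, T δ (s * t) = T ε s * T δ t + T ε t * T δ s := by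
    intro s t
    induction s with
    | zero => simp
    | add s s' hs hs' => simp only [add_mul, map_add, hs, hs', mul_add]; ring
    | tmul a b =>
      induction t with
      | zero => simp
      | add t t' ht ht' => simp only [add_mul, map_add, ht, ht', mul_add]; ring
      | tmul c d =>
        simp only [T, LinearMap.comp_apply, Algebra.TensorProduct.tmul_mul_tmul,
          LinearMap.lTensor_tmul, LinearEquiv.coe_coe, _root_.TensorProduct.rid_tmul, hδ, add_smul,
          smul_mul_smul_comm, mul_comm a c]
  have hid : ∀ x, T ε (Coalgebra.comul x) = x := fun x => LinearMap.congr_fun hε x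
  refine ⟨Derivation.mk' (Coalgebra.convolve δ) fun x y => ?_, fun x => rfl⟩
  change T δ (Coalgebra.comul (x * y)) =
    x • T δ (Coalgebra.comul y) + y • T δ (Coalgebra.comul x)
  rw [Bialgebra.comul_mul, hT, hid, hid, smul_eq_mul, smul_eq_mul]

/-- The convolution action of evaluation at `a` is adjoint to multiplication by `a`. -/
theorem Coalgebra.pair_convolve_eval {k A B : Type*} [CommRing k] [CommRing A] [Algebra k A]
    [CommRing B] [Algebra k B] [Coalgebra k B] (pair : B →ₗ[k] Module.Dual k A)
    (hcomul : ∀ x : B,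
      (TensorProduct.dualDistrib k A A ∘ₗ _root_.TensorProduct.map pair pair) (Coalgebra.comul x)
        = (LinearMap.mul' k A).dualMap (pair x)) (a c : A) (x : B) :
    pair (Coalgebra.convolve (pair.flip a) x) c = pair x (c * a) := by
  have h := LinearMap.congr_fun (hcomul x) (c ⊗ₜ a)
  simp only [LinearMap.dualMap_apply, LinearMap.mul'_apply] at h
  rw [← h]
  simp only [Coalgebra.convolve, LinearMap.comp_apply]
  generalize (Coalgebra.comul x : B ⊗[k] B) = t
  induction t with
  | zero => simp
  | add s t hs ht => simp only [map_add, LinearMap.add_apply, hs, ht]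
  | tmul y z => simp [mul_comm]

theorem dual_polynomial_iff_verschiebung_surjective
    (p : ℕ) [Fact p.Prime] (A B : Type u)
    [CommRing A] [HopfAlgebra (ZMod p) A]
    [CommRing B] [HopfAlgebra (ZMod p) B]
    (hA : IsCocomm (ZMod p) A) (hB : IsCocomm (ZMod p) B)
    (𝒜 : ℕ → Submodule (ZMod p) A) [GradedAlgebra 𝒜]
    (ℬ : ℕ → Submodule (ZMod p) B) [GradedAlgebra ℬ]
    -- connectedness and finite type of `A`
    (hconn : ∀ x ∈ 𝒜 0, ∃ c : ZMod p, x = c • (1 : A))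
    (hft : ∀ n, FiniteDimensional (ZMod p) (𝒜 n))
    -- `B` is the graded dual of `A`, via the pairing `pair`:
    (pair : B →ₗ[ZMod p] Module.Dual (ZMod p) A)
    -- the pairing is graded
    (hgr : ∀ n, ∀ x ∈ ℬ n, ∀ m, m ≠ n → ∀ a ∈ 𝒜 m, pair x a = 0)
    -- the pairing is perfect in each degree
    (hinj : Function.Injective pair)
    (hsurj : ∀ (n : ℕ) (φ : Module.Dual (ZMod p) (𝒜 n)),
      ∃ x ∈ ℬ n, ∀ a : 𝒜 n, pair x a = φ a)
    -- multiplication of `B` is dual to comultiplication of `A`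
    (hmul : ∀ x y : B, pair (x * y) =
      (Coalgebra.comul (R := ZMod p) (A := A)).dualMap
        (TensorProduct.dualDistrib (ZMod p) A A (pair x ⊗ₜ pair y)))
    -- comultiplication of `B` is dual to multiplication of `A`
    (hcomul : ∀ x : B,
      (TensorProduct.dualDistrib (ZMod p) A A ∘ₗ TensorProduct.map pair pair)
          (Coalgebra.comul x)
        = (LinearMap.mul' (ZMod p) A).dualMap (pair x))
    (hone : pair 1 = (Coalgebra.counit : A →ₗ[ZMod p] ZMod p))
    -- the Verschiebung `lam` of `A`, adjoint to the Frobenius of `B`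
    (lam : A →ₗ[ZMod p] A)
    (hlam : ∀ (x : B) (a : A), pair x (lam a) = pair (x ^ p) a) :
    (∃ σ : Type u, Nonempty (B ≃ₐ[ZMod p] MvPolynomial σ (ZMod p))) ↔
      Function.Surjective lam := by
  have hp := (Fact.out : p.Prime)
  have hone1 : pair 1 1 = 1 := by rw [hone, Bialgebra.counit_one]
  have : Nontrivial B := by
    refine ⟨1, 0, fun h => ?_⟩
    rw [h, map_zero, LinearMap.zero_apply] at hone1
    exact zero_ne_one hone1
  constructor
  · rintro ⟨σ, ⟨e⟩⟩
    have hred : ∀ x : B, x ^ p = 0 → x = 0 := fun x hx => by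
      have h : e x ^ p = 0 := by rw [← map_pow, hx, map_zero]
      exact (map_eq_zero_iff e e.injective).1 (pow_eq_zero_iff hp.ne_zero |>.1 h)
    have hdeg : ∀ m, ∀ a ∈ 𝒜 (p * m), lam a ∈ 𝒜 m := fun m a ha => by
      refine GradedPairing.mem_right_of_forall hgr hsurj fun l hl x hx => ?_
      rw [hlam]
      refine hgr (p * l) _ (SetLike.pow_mem_graded p hx) _ (fun h => hl ?_) a ha
      exact (Nat.eq_of_mul_eq_mul_left hp.pos h).symm
    have hhom : ∀ m, 𝒜 m ≤ LinearMap.range lam := by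
      intro m y hy
      by_contra hny
      obtain ⟨φ, hφ, hφ0⟩ := Submodule.exists_dual_map_eq_bot_of_notMem
        (p := (LinearMap.range lam).comap (𝒜 m).subtype) (x := ⟨y, hy⟩) hny inferInstance
      obtain ⟨x, hx, hxφ⟩ := hsurj m φ
      have hx0 : x ^ p = 0 := by
        refine GradedPairing.eq_zero_of_forall hgr hinj (SetLike.pow_mem_graded p hx)
          fun a ha => ?_
        rw [← hlam, hxφ ⟨lam a, hdeg m a ha⟩, ← Submodule.mem_bot (ZMod p), ← hφ0]
        exact Submodule.mem_map_of_mem (Submodule.mem_comap.2 ⟨a, rfl⟩)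
      apply hφ
      rw [← hxφ ⟨y, hy⟩, hred x hx0, map_zero, LinearMap.zero_apply]
    intro y
    classical
    rw [← LinearMap.mem_range, ← DirectSum.sum_support_decompose 𝒜 y]
    exact sum_mem fun i _ => hhom i (SetLike.coe_mem _)
  · intro hlamsurj
    have hconnB : ∀ x ∈ ℬ 0, x = pair x 1 • (1 : B) := fun x hx => by
      refine sub_eq_zero.1 (GradedPairing.eq_zero_of_forall hgr hinj
        (sub_mem hx (Submodule.smul_mem _ _ (SetLike.one_mem_graded ℬ))) fun a ha => ?_)
      obtain ⟨c, rfl⟩ := hconn a ha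
      simp [hone1, mul_comm]
    refine GradedAlgebra.exists_algEquiv_mvPolynomial ℬ (fun x hx => ?_)
      (fun x hx => ⟨_, hconnB x hx⟩) fun n δ hδdec hδ hn => ?_
    · refine hinj (LinearMap.ext fun a => ?_)
      obtain ⟨b, rfl⟩ := hlamsurj a
      rw [hlam, hx, map_zero]
      rfl
    · have := hft n
      obtain ⟨a, ha, haδ⟩ := GradedPairing.exists_mem_forall_apply_eq hgr hinj hsurj δ hδ
      obtain rfl : pair.flip a = δ := LinearMap.ext haδ
      have hε : Coalgebra.convolve (pair.flip 1) = LinearMap.id := by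
        refine LinearMap.ext fun x => hinj (LinearMap.ext fun c => ?_)
        rw [Coalgebra.pair_convolve_eval pair hcomul, mul_one, LinearMap.id_apply]
      have hε0 : ∀ i, 0 < i → ∀ x ∈ ℬ i, pair.flip 1 x = 0 := fun i hi x hx =>
        hgr i x hx 0 hi.ne _ (SetLike.one_mem_graded 𝒜)
      have hδ1 : pair.flip a 1 = 0 := hδ 0 hn.ne _ (SetLike.one_mem_graded ℬ)
      have hleib : ∀ x y, pair.flip a (x * y) =
          pair.flip 1 x * pair.flip a y + pair.flip 1 y * pair.flip a x := by
        intro x y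
        induction x using DirectSum.Decomposition.inductionOn ℬ with
        | zero => simp
        | add x x' hx hx' => simp only [add_mul, map_add, hx, hx', mul_add]; ring
        | @homogeneous i x =>
          induction y using DirectSum.Decomposition.inductionOn ℬ with
          | zero => simp
          | add y y' hy hy' => simp only [add_mul, map_add, hy, hy', mul_add]; ring
          | @homogeneous j y =>
            rcases Nat.eq_zero_or_pos i with rfl | hi
            · rw [hconnB x x.2]
              simp only [smul_mul_assoc, one_mul, map_smul, hδ1, smul_eq_mul, mul_zero, add_zero,
                LinearMap.flip_apply, hone1, mul_one]
            rcases Nat.eq_zero_or_pos j with rfl | hj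
            · rw [hconnB y y.2]
              simp only [mul_smul_comm, mul_one, map_smul, hδ1, smul_eq_mul, mul_zero, zero_add,
                LinearMap.flip_apply, hone1]
            · rw [hδdec i j hi hj x x.2 y y.2, hε0 i hi x x.2, hε0 j hj y y.2]
              simp
      obtain ⟨D, hD⟩ := Bialgebra.exists_derivation_eq_convolve _ _ hε hleib
      have hpair : ∀ x c, pair (D x) c = pair x (c * a) := fun x c => by
        rw [hD, Coalgebra.pair_convolve_eval pair hcomul]
      refine ⟨D, fun x hx => ?_, fun m hm x hx => ?_⟩
      · have hmem : D x ∈ ℬ 0 := GradedPairing.mem_left_of_forall hgr hinj fun l hl c hc => by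
          rw [hpair]
          exact hgr n x hx (l + n) (by omega) _ (SetLike.mul_mem_graded hc ha)
        rw [hconnB _ hmem, hpair, one_mul, LinearMap.flip_apply]
      · refine hinj (LinearMap.ext fun c => ?_)
        rw [map_zero, LinearMap.zero_apply]
        induction c using DirectSum.Decomposition.inductionOn 𝒜 with
        | zero => simp
        | add c c' hc hc' => rw [map_add, hc, hc', add_zero]
        | @homogeneous l c =>
          rw [hpair]
          exact hgr m x hx (l + n) (by omega) _ (SetLike.mul_mem_graded c.2 ha)
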